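/- arXiv:2301.00199 — 16 statements merged into one kernel-verified Lean document; each statement's English description precedes it below -/
import Mathlib

section
/- Let A be a set of action labels and let M and N be LTSs over A such that N is deterministic. Then traces(M) ⊆ traces(N) if and only if there exists a simulation from M to N (i.e. M ⊑ N). -/
/-!
A simulation lifts every path of `M` to a path of `N` with the same labels, so `M ⊑ N` gives
trace inclusion (`steps_lift`). Conversely, relate `q` to `p` when every word readable from `q`
is readable from `p`; trace inclusion relates the start states. If `q -a→ q'`, then `a` is
readable from `p`, so `p -a→ p'` for some `p'`. A word `w` readable from `q'` makes `a :: w`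
readable from `q`, hence from `p`, and since `p'` is the only `a`-successor of `p`, `w` is
readable from `p'`. So this relation is a simulation.
-/

universe u v w

/-- A labeled transition system over label set `A` with state set `Q`. -/
structure LTS (Q : Type*) (A : Type*) where
  start : Q
  tr : Q → A → Q → Prop

section Defs

variable {Q Q₁ Q₂ A B C : Type*}

/-- `Steps M q w q'`: there is a path from `q` to `q'` whose labels spell `w`. -/
inductive Steps (M : LTS Q A) : Q → List A → Q → Prop
  | nil (q : Q) : Steps M q [] q
  | cons {q q' q'' : Q} {a : A} {w : List A} :
      M.tr q a q' → Steps M q' w q'' → Steps M q (a :: w) q''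

/-- The traces of an LTS. -/
def Traces (M : LTS Q A) : Set (List A) :=
  { w | ∃ q', Steps M M.start w q' }

/-- At most one `a`-successor of every state. -/
def Deterministic (M : LTS Q A) : Prop :=
  ∀ q a q' q'', M.tr q a q' → M.tr q a q'' → q' = q''

/-- `S` is a simulation from `M` to `N`. -/
def IsSimulation (M : LTS Q₁ A) (N : LTS Q₂ A) (S : Q₁ → Q₂ → Prop) : Prop :=
  S M.start N.start ∧
    ∀ q₁ q₂ a q₁', S q₁ q₂ → M.tr q₁ a q₁' → ∃ q₂', N.tr q₂ a q₂' ∧ S q₁' q₂'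

/-- `M ⊑ N`: there exists a simulation from `M` to `N`. -/
def Simulates (M : LTS Q₁ A) (N : LTS Q₂ A) : Prop :=
  ∃ S, IsSimulation M N S

def Reachable (M : LTS Q A) (q : Q) : Prop :=
  ∃ w, Steps M M.start w q

lemma reachable_start (M : LTS Q A) : Reachable M M.start :=
  ⟨[], Steps.nil M.start⟩

/-- Isomorphism of the reachable parts of two LTSs. -/
def Isomorphic (M : LTS Q₁ A) (N : LTS Q₂ A) : Prop :=
  ∃ f : { q : Q₁ // Reachable M q } → { p : Q₂ // Reachable N p },
    Function.Bijective f ∧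
    (f ⟨M.start, reachable_start M⟩).1 = N.start ∧
    ∀ (q q' : { q : Q₁ // Reachable M q }) (a : A),
      M.tr q.1 a q'.1 ↔ N.tr (f q).1 a (f q').1

/-- A leaf is a state without outgoing transitions. -/
def Leaf (M : LTS Q A) (q : Q) : Prop :=
  ¬ ∃ a q', M.tr q a q'

/-- A path from the start state to `q`, recording labels and visited states. -/
inductive PathTo (M : LTS Q A) : Q → List (A × Q) → Prop
  | nil : PathTo M M.start []
  | snoc {q q' : Q} {a : A} {p : List (A × Q)} :
      PathTo M q p → M.tr q a q' → PathTo M q' (p ++ [(a, q')])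

/-- Every state is reached from the start by a unique sequence of transitions. -/
def TreeShaped (M : LTS Q A) : Prop :=
  ∀ q : Q, ∃! p : List (A × Q), PathTo M q p

/-- Every state has a path to a leaf. -/
def Grounded (M : LTS Q A) : Prop :=
  ∀ q : Q, ∃ w q', Steps M q w q' ∧ Leaf M q'

/-- The partial map assigns only nonempty words. -/
def NonemptyValued (R : B → Option (List A)) : Prop :=
  ∀ b w, R b = some w → w ≠ []

/-- Prefix-freeness of a partial map into words. -/
def PrefixFree (R : B → Option (List A)) : Prop :=
  ∀ b b' w w', R b = some w → R b' = some w' → w <+: w' → b = b'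

/-- A map-based action code from `A` to `B`: a prefix-free partial map `B ⇀ A⁺`. -/
def IsActionCode (R : B → Option (List A)) : Prop :=
  NonemptyValued R ∧ PrefixFree R

/-- The states of the contraction `α_R(M)`, generated inductively. -/
inductive AlphaState (R : B → Option (List A)) (M : LTS Q A) : Q → Prop
  | start : AlphaState R M M.start
  | step {q q' : Q} {b : B} {w : List A} :
      AlphaState R M q → R b = some w → Steps M q w q' → AlphaState R M q'

/-- The contraction `α_R(M)`. -/
def contraction (R : B → Option (List A)) (M : LTS Q A) : LTS Q B where
  start := M.start
  tr := fun q b q' => AlphaState R M q ∧ ∃ w, R b = some w ∧ Steps M q w q'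

/-- The states of the refinement `ρ_R(M)`. -/
def RhoState (R : B → Option (List A)) (M : LTS Q B) (p : Q × List A) : Prop :=
  p.2 = [] ∨ ∃ b q' w, M.tr p.1 b q' ∧ R b = some w ∧ p.2 <+: w ∧ p.2 ≠ w

/-- The refinement `ρ_R(M)`. -/
def refinement (R : B → Option (List A)) (M : LTS Q B) : LTS (Q × List A) A where
  start := (M.start, [])
  tr := fun p a p' =>
    (p'.1 = p.1 ∧ p'.2 = p.2 ++ [a] ∧ RhoState R M p') ∨
    (p'.2 = [] ∧ ∃ b, M.tr p.1 b p'.1 ∧ R b = some (p.2 ++ [a]))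

/-- Internal nodes of the code tree: the empty word and strict prefixes of code words. -/
def NState (R : B → Option (List A)) (wa : List A) : Prop :=
  wa = [] ∨ ∃ b v, R b = some v ∧ wa <+: v ∧ wa ≠ v

/-- The concretization `γ_R(M)`, taken w.r.t. the identity relation on `A`;
the state `none` is the chaos state `χ`. -/
def concretization (R : B → Option (List A)) (M : LTS Q B) :
    LTS (Option (Q × List A)) A where
  start := some (M.start, [])
  tr := fun s a s' =>
    match s with
    | some (q, w) =>
        (s' = some (q, w ++ [a]) ∧ NState R (w ++ [a])) ∨
        (∃ b q', M.tr q b q' ∧ R b = some (w ++ [a]) ∧ s' = some (q', [])) ∨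
        (s' = none ∧ ¬ NState R (w ++ [a]) ∧ ∀ b, R b ≠ some (w ++ [a]))
    | none => s' = none

/-- Homomorphic extension of a code to words (defined iff defined on all letters). -/
def flattenCode (R : B → Option (List A)) : List B → Option (List A)
  | [] => some []
  | b :: bs => (R b).bind fun w => (flattenCode R bs).map fun ws => w ++ ws

/-- Kleisli composition `R * S` of map-based action codes. -/
def compCode (R : B → Option (List A)) (S : C → Option (List B)) :
    C → Option (List A) :=
  fun c => (S c).bind (flattenCode R)

/-- Output determinism of a Mealy machine. -/
def OutputDeterministic {I O : Type*} (M : LTS Q (I × O)) : Prop :=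
  ∀ q i o o' r r', M.tr q (i, o) r → M.tr q (i, o') r' → o = o' ∧ r = r'

/-- Determinate action codes over Mealy alphabets. -/
def Determinate {I O X Y : Type*} (R : X × Y → Option (List (I × O))) : Prop :=
  ∀ x y₁ y₂ w₁ w₂ u i₁ o₁ i₂ o₂,
    R (x, y₁) = some w₁ → R (x, y₂) = some w₂ →
    (u ++ [(i₁, o₁)]) <+: w₁ → (u ++ [(i₂, o₂)]) <+: w₂ → i₁ = i₂

end Defs

/-- Related states: each path of `M` is matched, label by label, by a path of `N`. -/
lemma steps_lift {Q₁ Q₂ A : Type*} {M : LTS Q₁ A} {N : LTS Q₂ A} {S : Q₁ → Q₂ → Prop}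
    (hS : ∀ q₁ q₂ a q₁', S q₁ q₂ → M.tr q₁ a q₁' → ∃ q₂', N.tr q₂ a q₂' ∧ S q₁' q₂')
    {q q' : Q₁} {w : List A} (hq : Steps M q w q') {p : Q₂} (hp : S q p) :
    ∃ p', Steps N p w p' := by
  induction hq generalizing p with
  | nil _ => exact ⟨p, .nil p⟩
  | cons ht _ ih =>
    obtain ⟨p₁, hp₁, hS₁⟩ := hS _ _ _ _ hp ht
    obtain ⟨p', hp'⟩ := ih hS₁
    exact ⟨p', .cons hp₁ hp'⟩

/-- For LTSs `M`, `N` over `A` with `N` deterministic,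
`traces(M) ⊆ traces(N)` iff `M ⊑ N`. -/
theorem traces_subset_iff_simulates {Q₁ Q₂ A : Type*} (M : LTS Q₁ A) (N : LTS Q₂ A)
    (hN : Deterministic N) :
    Traces M ⊆ Traces N ↔ Simulates M N := by
  constructor
  · intro h
    refine ⟨fun q p => ∀ w, (∃ q', Steps M q w q') → ∃ p', Steps N p w p', fun w hw => h hw, ?_⟩
    intro q p a q' hS hq
    obtain ⟨_, hp⟩ := hS [a] ⟨q', .cons hq (.nil q')⟩
    cases hp with
    | @cons _ p' _ _ _ hp _ =>
      refine ⟨p', hp, fun w ⟨r, hr⟩ => ?_⟩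
      obtain ⟨s, hs⟩ := hS (a :: w) ⟨r, .cons hq hr⟩
      cases hs with
      | cons hp₂ hs =>
        -- Determinism: the first step of the path for `a :: w` also leads to `p'`.
        rw [hN _ _ _ _ hp₂ hp] at hs
        exact ⟨s, hs⟩
  · rintro ⟨S, h₀, hS⟩ w ⟨q, hq⟩
    exact steps_lift hS hq h₀
end

section
/- For every action code R from A to B and all LTSs M, N over A: if M ⊑ N, then α_R(M) ⊑ α_R(N) (contraction is monotone with respect to the simulation preorder). -/
/-!
A simulation `S` from `M` to `N` lifts from single letters to words (`IsSimulation.steps`), so each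
code word `R b` read in `M` can be matched in `N`. A transition of a contraction also requires its
source to be a generated state, so the simulation between the contractions is `S` restricted to
pairs whose second component is a state of `α_R(N)`.
-/

universe u v w

/-- A simulation matches whole words, not just single letters. -/
lemma IsSimulation.steps {Q₁ Q₂ A : Type*} {M : LTS Q₁ A} {N : LTS Q₂ A} {S : Q₁ → Q₂ → Prop}
    (hS : IsSimulation M N S) {q₁ q₁' : Q₁} {w : List A} (hw : Steps M q₁ w q₁') :
    ∀ {q₂ : Q₂}, S q₁ q₂ → ∃ q₂', Steps N q₂ w q₂' ∧ S q₁' q₂' := by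
  induction hw with
  | nil q => exact fun {q₂} h => ⟨q₂, Steps.nil q₂, h⟩
  | cons htr _ ih =>
    intro q₂ h
    obtain ⟨p, hp, hSp⟩ := hS.2 _ _ _ _ h htr
    obtain ⟨p', hp', hSp'⟩ := ih hSp
    exact ⟨p', Steps.cons hp hp', hSp'⟩

/-- contraction is monotone w.r.t. the simulation preorder. -/
theorem contraction_monotone {Q₁ Q₂ A B : Type*} (R : B → Option (List A))
    (hR : IsActionCode R) (M : LTS Q₁ A) (N : LTS Q₂ A) (h : Simulates M N) :
    Simulates (contraction R M) (contraction R N) := by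
  obtain ⟨S, hS⟩ := h
  refine ⟨fun q₁ q₂ => S q₁ q₂ ∧ AlphaState R N q₂, ⟨hS.1, AlphaState.start⟩, ?_⟩
  rintro q₁ q₂ b q₁' ⟨hq, hN⟩ ⟨_, w, hb, hw⟩
  obtain ⟨q₂', hw', hq'⟩ := hS.steps hw hq
  exact ⟨q₂', ⟨hN, w, hb, hw'⟩, hq', AlphaState.step hN hb hw'⟩
end

section
/- For every action code R from A to B and all LTSs M, N over B: if M ⊑ N, then ρ_R(M) ⊑ ρ_R(N) (refinement is monotone with respect to the simulation preorder). -/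
universe u v w

/-- refinement is monotone w.r.t. the simulation preorder. -/
theorem refinement_monotone {Q₁ Q₂ A B : Type*} (R : B → Option (List A))
    (hR : IsActionCode R) (M : LTS Q₁ B) (N : LTS Q₂ B) (h : Simulates M N) :
    Simulates (refinement R M) (refinement R N) := by
  obtain ⟨S, hstart, hstep⟩ := h
  -- Relate states with the same partially read code word over `S`-related base states.
  refine ⟨fun p₁ p₂ => S p₁.1 p₂.1 ∧ p₁.2 = p₂.2, ⟨hstart, rfl⟩, ?_⟩
  rintro ⟨q₁, u⟩ ⟨q₂, _⟩ a ⟨q₁', u'⟩ ⟨hS, rfl⟩ (⟨hq, hu, hstate⟩ | ⟨hu, b, htr, hb⟩)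
    <;> dsimp only at *
  · subst hq hu
    refine ⟨(q₂, u ++ [a]), Or.inl ⟨rfl, rfl, ?_⟩, hS, rfl⟩
    -- The `b`-transition witnessing the intermediate state in `M` is matched by one in `N`.
    rcases hstate with hnil | ⟨b, r, w, htr, hb, hpre, hne⟩
    · exact Or.inl hnil
    · obtain ⟨r', htr', -⟩ := hstep _ _ _ _ hS htr
      exact Or.inr ⟨b, r', w, htr', hb, hpre, hne⟩
  · subst hu
    obtain ⟨q₂', htr', hS'⟩ := hstep _ _ _ _ hS htr
    exact ⟨(q₂', []), Or.inr ⟨rfl, b, htr', hb⟩, hS', rfl⟩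
end

section
/- For every action code R from A to B: if M is a deterministic LTS over B, then the refinement ρ_R(M) is a deterministic LTS over A. -/
/-!
From `(q, w)`, an `a`-step of the refinement either extends the partial word to `w ++ [a]`,
a strict prefix of a code word, or completes the code word `w ++ [a]`. Prefix-freeness forbids
that a code word be a strict prefix of another (`not_rhoState_of_code`), so the two kinds of step
never compete. Extending steps have a fixed target; for completing steps, `R` is injective on its
domain, so the label `b` with `R b = w ++ [a]` is unique and determinism of `M` fixes the target.
-/

universe u v w

/-- A code word is never an intermediate word of the refinement. -/
lemma not_rhoState_of_code {Q A B : Type*} {R : B → Option (List A)} (hR : IsActionCode R)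
    {M : LTS Q B} {p : Q × List A} {b : B} (hb : R b = some p.2) : ¬ RhoState R M p := by
  rintro (h | ⟨b', q', w, -, hb', hpre, hne⟩)
  · exact hR.1 b _ hb h
  · obtain rfl := hR.2 b b' _ _ hb hb' hpre
    exact hne (Option.some.inj (hb.symm.trans hb'))

/-- refinement preserves determinism. -/
theorem refinement_preserves_determinism {Q A B : Type*} (R : B → Option (List A))
    (hR : IsActionCode R) (M : LTS Q B) (hM : Deterministic M) :
    Deterministic (refinement R M) := by
  rintro ⟨q, w⟩ a ⟨q₁, w₁⟩ ⟨q₂, w₂⟩ h₁ h₂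
  rcases h₁ with ⟨e₁, f₁, s₁⟩ | ⟨e₁, b₁, t₁, r₁⟩ <;>
    rcases h₂ with ⟨e₂, f₂, s₂⟩ | ⟨e₂, b₂, t₂, r₂⟩
  · exact Prod.ext (e₁.trans e₂.symm) (f₁.trans f₂.symm)
  · exact absurd s₁ (not_rhoState_of_code hR (r₂.trans (congrArg some f₁.symm)))
  · exact absurd s₂ (not_rhoState_of_code hR (r₁.trans (congrArg some f₂.symm)))
  · obtain rfl := hR.2 b₁ b₂ _ _ r₁ r₂ List.prefix_rfl
    exact Prod.ext (hM _ _ _ _ t₁ t₂) (e₁.trans e₂.symm)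
end

section
/- Let R be an action code from A to B, N an LTS over B, and M an LTS over A. If every action label occurring on a transition of N belongs to dom(R), then ρ_R(N) ⊑ M implies N ⊑ α_R(M). -/
/-!
A simulation `S` from `ρ_R(N)` to `M` restricts to a simulation from `N` to `α_R(M)`: relate `q₁`
to `q₂` when `(q₁, ε) S q₂` and `q₂` is a state of the contraction. A transition `q₁ -b→ q₁'` of `N`
unfolds in `ρ_R(N)` to a path from `(q₁, ε)` to `(q₁', ε)` spelling `R(b)` (`refinement_steps`), and
a simulation transports paths (`IsSimulation.steps`).
-/



universe u v w

/-- If the part `u` of the code word `R b = u ++ v` has already been read, the remainder `v ≠ ε`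
leads in the refinement to the target of the `b`-transition. -/
lemma refinement_steps {Q A B : Type*} {R : B → Option (List A)} {N : LTS Q B} {q q' : Q} {b : B}
    (ht : N.tr q b q') (v : List A) : ∀ u : List A, v ≠ [] → R b = some (u ++ v) →
      Steps (refinement R N) (q, u) v (q', []) := by
  induction v with
  | nil => exact fun _ h => absurd rfl h
  | cons a v ih =>
    intro u _ hb
    rcases eq_or_ne v [] with rfl | hv
    · exact Steps.cons (Or.inr ⟨rfl, b, ht, hb⟩) (Steps.nil _)
    · have hb' : R b = some ((u ++ [a]) ++ v) := by simpa using hb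
      refine Steps.cons (q' := (q, u ++ [a])) (Or.inl ⟨rfl, rfl, Or.inr ?_⟩) (ih _ hv hb')
      exact ⟨b, q', _, ht, hb', List.prefix_append _ _, fun h => hv (List.self_eq_append_right.mp h)⟩

/-- Galois connection, first direction. If every label occurring on a
transition of `N` is in `dom(R)`, then `ρ_R(N) ⊑ M` implies `N ⊑ α_R(M)`. -/
theorem refinement_galois_forward {Q₁ Q₂ A B : Type*} (R : B → Option (List A))
    (hR : IsActionCode R) (N : LTS Q₁ B) (M : LTS Q₂ A)
    (hdom : ∀ q b q', N.tr q b q' → ∃ w, R b = some w)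
    (h : Simulates (refinement R N) M) :
    Simulates N (contraction R M) := by
  obtain ⟨S, hS⟩ := h
  refine ⟨fun q₁ q₂ => S (q₁, []) q₂ ∧ AlphaState R M q₂, ⟨hS.1, AlphaState.start⟩, ?_⟩
  rintro q₁ q₂ b q₁' ⟨hq, hα⟩ ht
  obtain ⟨w, hw⟩ := hdom _ _ _ ht
  obtain ⟨q₂', hsteps, hq'⟩ := hS.steps (refinement_steps ht w [] (hR.1 b w hw) hw) hq
  exact ⟨q₂', ⟨hα, w, hw, hsteps⟩, hq', AlphaState.step hα hw hsteps⟩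
end

section
/- Let R be an action code from A to B, N an LTS over B, and M an LTS over A. If M is deterministic, then N ⊑ α_R(M) implies ρ_R(N) ⊑ M. -/
/-!
A state `(q, w)` of `ρ_R(N)` remembers that `q` has started, and read the part `w` of, some code
word. Given a simulation `S` from `N` to `α_R(M)`, relate `(q, w)` to `p` when `p` is reached by `w`
from some `p₀` with `S q p₀`. Every transition of `ρ_R(N)` out of `(q, w)` with label `a` stems from
a transition `q -b→ q'` of `N` such that `wa` is a prefix of `R(b)`. The simulation provides a run of
`M` from `p₀` spelling all of `R(b)`; since `M` is deterministic, its part spelling `w` ends in the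
state `p` (`Steps.eq_of_deterministic`), so the run continues with an `a`-transition out of `p`.
-/

universe u v w

lemma Steps.append_iff {Q A : Type*} {M : LTS Q A} {u v : List A} {q r : Q} :
    Steps M q (u ++ v) r ↔ ∃ p, Steps M q u p ∧ Steps M p v r := by
  induction u generalizing q with
  | nil =>
    constructor
    · intro h
      exact ⟨q, .nil q, h⟩
    · rintro ⟨p, ⟨⟩, h⟩
      exact h
  | cons a u ih =>
    constructor
    · rintro (_ | ⟨ht, hs⟩)
      obtain ⟨p, hu, hv⟩ := ih.1 hs
      exact ⟨p, .cons ht hu, hv⟩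
    · rintro ⟨p, _ | ⟨ht, hu⟩, hv⟩
      exact .cons ht (ih.2 ⟨p, hu, hv⟩)

lemma Steps.singleton_iff {Q A : Type*} {M : LTS Q A} {a : A} {q r : Q} :
    Steps M q [a] r ↔ M.tr q a r := by
  constructor
  · rintro (_ | ⟨ht, ⟨⟩⟩)
    exact ht
  · intro ht
    exact .cons ht (.nil r)

lemma Steps.eq_of_deterministic {Q A : Type*} {M : LTS Q A} (hM : Deterministic M)
    {u : List A} {q r r' : Q} (h : Steps M q u r) (h' : Steps M q u r') : r = r' := by
  induction h with
  | nil => cases h'; rfl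
  | cons ht _ ih =>
    obtain _ | ⟨ht', hs'⟩ := h'
    obtain rfl := hM _ _ _ _ ht ht'
    exact ih hs'

/-- In a deterministic LTS, if `w` leads from `p₀` to `p` and `w ++ a :: v` can be run from `p₀`,
then that run passes through `p` and takes an `a`-transition there. -/
lemma Steps.exists_tr_of_deterministic {Q A : Type*} {M : LTS Q A} (hM : Deterministic M)
    {w v : List A} {a : A} {p₀ p r : Q} (hw : Steps M p₀ w p)
    (h : Steps M p₀ (w ++ [a] ++ v) r) :
    ∃ p', M.tr p a p' ∧ Steps M p₀ (w ++ [a]) p' ∧ Steps M p' v r := by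
  obtain ⟨p', hwa, hv⟩ := Steps.append_iff.1 h
  obtain ⟨s, hs, ha⟩ := Steps.append_iff.1 hwa
  obtain rfl := hw.eq_of_deterministic hM hs
  exact ⟨p', Steps.singleton_iff.1 ha, hwa, hv⟩

/-- Galois connection, second direction. If `M` is deterministic,
then `N ⊑ α_R(M)` implies `ρ_R(N) ⊑ M`. -/
theorem refinement_galois_backward {Q₁ Q₂ A B : Type*} (R : B → Option (List A))
    (hR : IsActionCode R) (N : LTS Q₁ B) (M : LTS Q₂ A)
    (hM : Deterministic M)
    (h : Simulates N (contraction R M)) :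
    Simulates (refinement R N) M := by
  obtain ⟨S, hstart, hstep⟩ := h
  refine ⟨fun s p => ∃ p₀, S s.1 p₀ ∧ Steps M p₀ s.2 p, ⟨M.start, hstart, .nil _⟩, ?_⟩
  rintro ⟨q, w⟩ p a ⟨q', w'⟩ ⟨p₀, hS, hw⟩ (⟨hq, hw', hρ⟩ | ⟨hw', b, hb, hRb⟩)
  · -- The state component of `ρ_R(N)` stays in `q`, and `wa` is a strict prefix of a code word.
    dsimp only at hq hw' hw hS
    subst hq hw'
    obtain hnil | ⟨b, r, _, hb, hRb, ⟨v, rfl⟩, -⟩ := hρ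
    · simp at hnil
    obtain ⟨p₁, ⟨-, x, hx, hrun⟩, -⟩ := hstep _ _ _ _ hS hb
    obtain rfl := Option.some.inj (hRb.symm.trans hx)
    obtain ⟨p', ha, hwa, -⟩ := hw.exists_tr_of_deterministic hM hrun
    exact ⟨p', ha, p₀, hS, hwa⟩
  · -- The word `wa` is a full code word, and `ρ_R(N)` moves to `(q', ε)`.
    dsimp only at hw' hb hRb hw hS
    subst hw'
    obtain ⟨p₁, ⟨-, x, hx, hrun⟩, hS'⟩ := hstep _ _ _ _ hS hb
    obtain rfl := Option.some.inj (hRb.symm.trans hx)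
    obtain ⟨p', ha, -, hend⟩ :=
      hw.exists_tr_of_deterministic hM (v := []) (by rwa [List.append_nil])
    cases hend
    exact ⟨p₁, ha, p₁, hS', .nil _⟩
end

section
/- Let R be an action code from A to B, M an LTS over B, b ∈ dom(R), and q, q' ∈ Q^M. Then q -b→ q' in M if and only if (q, ε) =R(b)⇒ (q', ε) in ρ_R(M). -/
/-!
A path of `ρ_R(M)` from `(q, ε)` labelled by the code word `R b` has only one possible shape: it
records the letters read so far and returns to an `ε`-state at the very last letter. By
prefix-freeness no proper nonempty prefix of `R b` is a code word, so no earlier return is possible,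
and the final return comes from a transition labelled `b` itself. `tr_iff_steps_of_suffix` proves
this by induction on the part of the word still to be read.
-/

universe u v w

/-- The statement along a code word: after reading a prefix `u` of `R b`, reading the nonempty rest
`v` leads from `(q, u)` to `(q', ε)` exactly when `q -b→ q'`. -/
lemma tr_iff_steps_of_suffix {Q A B : Type*} (R : B → Option (List A))
    (hR : PrefixFree R) (M : LTS Q B) (b : B) (q q' : Q) (v : List A) :
    ∀ u : List A, v ≠ [] → R b = some (u ++ v) →
      (M.tr q b q' ↔ Steps (refinement R M) (q, u) v (q', [])) := by
  induction v with
  | nil => intro u h; exact absurd rfl h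
  | cons a v ih =>
    intro u _ hb
    have happ : (u ++ [a]) ++ v = u ++ a :: v := by simp
    by_cases hv : v = []
    · subst hv
      constructor
      · intro h
        exact Steps.cons (Or.inr ⟨rfl, b, h, hb⟩) (Steps.nil _)
      · intro h
        cases h with
        | cons ht hs =>
          cases hs
          rcases ht with ⟨_, h2, _⟩ | ⟨_, b', hb', hRb'⟩
          · simp at h2
          · obtain rfl := hR b' b _ _ hRb' hb (List.prefix_refl _)
            exact hb'
    · have ih' := ih (u ++ [a]) hv (by rw [happ]; exact hb)
      constructor
      · intro h
        refine Steps.cons (q' := (q, u ++ [a]))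
          (Or.inl ⟨rfl, rfl, Or.inr ⟨b, q', _, h, hb, ⟨v, happ⟩, ?_⟩⟩) (ih'.1 h)
        simpa using Ne.symm hv
      · intro h
        cases h with
        | @cons _ p _ _ _ ht hs =>
          obtain ⟨p1, p2⟩ := p
          rcases ht with ⟨h1, h2, _⟩ | ⟨_, b', _, hRb'⟩
          · dsimp only at h1 h2
            subst h1 h2
            exact ih'.2 hs
          -- A return to an `ε`-state here would make `u ++ [a]`, a strict prefix of `R b`, a code word.
          · obtain rfl := hR b' b _ _ hRb' hb ⟨v, happ⟩
            rw [hRb'] at hb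
            simp at hb
            exact absurd hb hv

/-- `q -b→ q'` in `M` iff `(q, ε) =R(b)⇒ (q', ε)` in `ρ_R(M)`. -/
theorem refinement_basic {Q A B : Type*} (R : B → Option (List A))
    (hR : IsActionCode R) (M : LTS Q B) (b : B) (w : List A) (hb : R b = some w)
    (q q' : Q) :
    M.tr q b q' ↔ Steps (refinement R M) (q, []) w (q', []) := by
  exact tr_iff_steps_of_suffix R hR.2 M b q q' w [] (hR.1 b w hb) hb
end

section
/- Let R be an action code from A to B and M an LTS over B. For every transition (q, w) -a→ (q', w') in ρ_R(M) there exist b ∈ dom(R), a state q'' of M, and a word u ∈ A* such that q -b→ q'' in M, w·a·u = R(b), and (q', w') =u⇒ (q'', ε) in ρ_R(M). -/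
/-!
A transition of `ρ_R(M)` either closes a code word, in which case `u = ε` works, or extends the
current word to `w·a`. In the latter case the target `(q, w·a)` is a state of `ρ_R(M)`, so `w·a` is
a strict prefix of some `R(b)` with `b` enabled in `q`, and the remaining letters of `R(b)` can be
read from there (`steps_refinement_of_code`).
-/

universe u v w

/-- From the intermediate state `(q, v)`, the nonempty remainder `u` of a code word `R(b) = v·u`
with `q -b→ q''` can be read in the refinement, ending in `(q'', ε)`. -/
lemma steps_refinement_of_code {Q A B : Type*} (R : B → Option (List A)) (M : LTS Q B)
    {q q'' : Q} {b : B} (hb : M.tr q b q'') (u : List A) :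
    ∀ v : List A, u ≠ [] → R b = some (v ++ u) →
      Steps (refinement R M) (q, v) u (q'', []) := by
  induction u with
  | nil => intro v hu; exact absurd rfl hu
  | cons c u ih =>
    intro v _ hv
    by_cases hu : u = []
    · subst hu
      exact Steps.cons (Or.inr ⟨rfl, b, hb, hv⟩) (Steps.nil _)
    · have hv' : R b = some ((v ++ [c]) ++ u) := by simpa using hv
      refine Steps.cons (q' := (q, v ++ [c])) (Or.inl ⟨rfl, rfl, Or.inr ?_⟩) (ih _ hu hv')
      exact ⟨b, q'', _, hb, hv', List.prefix_append _ _, by simpa using hu⟩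

/-- every transition `(q,w) -a→ (q',w')` of `ρ_R(M)` can be completed:
there are `b ∈ dom(R)`, `q''` and `u` with `q -b→ q''` in `M`, `w·a·u = R(b)` and
`(q',w') =u⇒ (q'', ε)` in `ρ_R(M)`. -/
theorem refinement_transition_completion {Q A B : Type*} (R : B → Option (List A))
    (hR : IsActionCode R) (M : LTS Q B) (q q' : Q) (w w' : List A) (a : A)
    (h : (refinement R M).tr (q, w) a (q', w')) :
    ∃ b q'' u, R b = some (w ++ [a] ++ u) ∧ M.tr q b q'' ∧
      Steps (refinement R M) (q', w') u (q'', []) := by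
  rcases h with ⟨h1, h2, h3⟩ | ⟨h1, b, hb, hRb⟩
  · dsimp only at h1 h2
    subst h1 h2
    rcases h3 with h3 | ⟨b, q'', x, hb, hRb, ⟨u, rfl⟩, hne⟩
    · simp at h3
    · have hu : u ≠ [] := by
        rintro rfl
        simp at hne
      exact ⟨b, q'', u, hRb, hb, steps_refinement_of_code R M hb u _ hu hRb⟩
  · dsimp only at h1
    subst h1
    exact ⟨b, q', [], by simpa using hRb, hb, Steps.nil _⟩
end

section
/- Let R be an action code from A to B, M an LTS over B, q a state of M, and b ∈ dom(R). Then: (1) if q -b→ q' in M, then (q, ε) =R(b)⇒ (q', ε) in γ_R(M); and (2) if (q, ε) =R(b)⇒ q̄ in γ_R(M), then q̄ = (q', ε) for some state q' of M with q -b→ q' in M. -/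
/-!
Fix `R(b) = u ++ v` with `v ≠ ε` and run `γ_R(M)` on `v` from the state `(q, u)`. After any letter
but the last, the word read is a strict prefix of `R(b)`, hence an internal node of
the code tree, and by prefix-freeness it is not a code word itself: the only possible move extends
the word component. On the last letter the word read is `R(b)`, which by prefix-freeness is not an
internal node and is the code word of `b` alone: the only possible moves are the `b`-transitions of
`M`. Both claims are the case `u = ε`. The lemmas
`concretization_tr_inner` and `concretization_tr_last` describe these two kinds of moves, and
`concretization_steps_iff` is the induction on `v`.
-/

universe u v w

/-- Before the last letter of a code word, the only move extends the word component. -/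
lemma concretization_tr_inner {Q A B : Type*} {R : B → Option (List A)}
    (hR : PrefixFree R) (M : LTS Q B) (q : Q) {b : B} {u v : List A} {a : A}
    (hb : R b = some (u ++ a :: v)) (hv : v ≠ []) (s : Option (Q × List A)) :
    (concretization R M).tr (some (q, u)) a s ↔ s = some (q, u ++ [a]) := by
  have hpre : u ++ [a] <+: u ++ a :: v := ⟨v, by simp⟩
  have hne : u ++ [a] ≠ u ++ a :: v := by simpa using hv.symm
  have hN : NState R (u ++ [a]) := Or.inr ⟨b, _, hb, hpre, hne⟩
  constructor
  · rintro (⟨h, -⟩ | ⟨b', q', -, hb', -⟩ | ⟨-, h, -⟩)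
    · exact h
    · obtain rfl := hR _ _ _ _ hb' hb hpre
      exact absurd (Option.some.inj (hb'.symm.trans hb)) hne
    · exact absurd hN h
  · exact fun h => Or.inl ⟨h, hN⟩

/-- On the last letter of the code word of `b`, the moves are the `b`-transitions of `M`. -/
lemma concretization_tr_last {Q A B : Type*} {R : B → Option (List A)}
    (hR : PrefixFree R) (M : LTS Q B) (q : Q) {b : B} {u : List A} {a : A}
    (hb : R b = some (u ++ [a])) (s : Option (Q × List A)) :
    (concretization R M).tr (some (q, u)) a s ↔ ∃ q', s = some (q', []) ∧ M.tr q b q' := by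
  constructor
  · rintro (⟨-, h | ⟨b', v, hb', hpre, hne⟩⟩ | ⟨b', q', ht, hb', h⟩ | ⟨-, -, h⟩)
    · simp at h
    · obtain rfl := hR _ _ _ _ hb hb' hpre
      exact absurd (Option.some.inj (hb.symm.trans hb')) hne
    · obtain rfl := hR _ _ _ _ hb' hb (List.prefix_refl _)
      exact ⟨q', h, ht⟩
    · exact absurd hb (h b)
  · rintro ⟨q', h, ht⟩
    exact Or.inr (Or.inl ⟨b, q', ht, hb, h⟩)

lemma concretization_steps_iff {Q A B : Type*} {R : B → Option (List A)}
    (hR : PrefixFree R) (M : LTS Q B) (q : Q) {b : B} (v : List A) :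
    ∀ u, R b = some (u ++ v) → v ≠ [] → ∀ s,
      (Steps (concretization R M) (some (q, u)) v s ↔
        ∃ q', s = some (q', []) ∧ M.tr q b q') := by
  induction v with
  | nil => exact fun _ _ h => absurd rfl h
  | cons a v ih =>
    intro u hb _ s
    by_cases hv : v = []
    · subst hv
      rw [← concretization_tr_last hR M q hb s]
      constructor
      · rintro (_ | ⟨ht, ⟨⟩⟩)
        exact ht
      · exact fun ht => Steps.cons ht (Steps.nil _)
    · rw [← ih (u ++ [a]) (by simpa using hb) hv s]
      constructor
      · rintro (_ | ⟨ht, hs⟩)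
        rw [concretization_tr_inner hR M q hb hv] at ht
        exact ht ▸ hs
      · exact fun hs => Steps.cons ((concretization_tr_inner hR M q hb hv _).2 rfl) hs

/-- for `b ∈ dom(R)`: (1) `q -b→ q'` in `M` implies
`(q,ε) =R(b)⇒ (q',ε)` in `γ_R(M)`; (2) any state reached from `(q,ε)` via `R(b)`
in `γ_R(M)` is of the form `(q',ε)` with `q -b→ q'` in `M`. -/
theorem concretization_basic {Q A B : Type*} (R : B → Option (List A))
    (hR : IsActionCode R) (M : LTS Q B) (q : Q) (b : B) (w : List A)
    (hb : R b = some w) :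
    (∀ q', M.tr q b q' →
      Steps (concretization R M) (some (q, [])) w (some (q', []))) ∧
    (∀ s, Steps (concretization R M) (some (q, [])) w s →
      ∃ q', s = some (q', []) ∧ M.tr q b q') := by
  have h := concretization_steps_iff hR.2 M q w [] hb (hR.1 b w hb)
  exact ⟨fun q' ht => (h _).2 ⟨q', rfl, ht⟩, fun s => (h s).1⟩
end

section
/- Let R be an action code from A to B, N an LTS over A, and M an LTS over B. If α_R(N) ⊑ M, then N ⊑ γ_R(M), where γ_R is the concretization taken with respect to the identity relation on A. -/
/-!
Given a simulation `S` from `α_R(N)` to `M`, the simulation from `N` to `γ_R(M)` relates `q` to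
`(m, w)` when some state `p` of `α_R(N)` has `p S m` and a `w`-path to `q` in `N`, and relates every
state to chaos. For a step `q -a→ q'` of `N`, the word `wa` is an internal node of the code tree
(move to `(m, wa)`), a code word `R(b)` (then `p -b→ q'` in `α_R(N)`, which `S` lets `M` match),
or neither (move to chaos).
-/

universe u v w

lemma Steps.snoc {Q A : Type*} {M : LTS Q A} {p q q' : Q} {w : List A} {a : A}
    (h : Steps M p w q) (ht : M.tr q a q') : Steps M p (w ++ [a]) q' := by
  induction h with
  | nil q => exact Steps.cons ht (Steps.nil _)
  | cons h₁ _ ih => exact Steps.cons h₁ (ih ht)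

/-- Galois connection for concretization, first direction:
`α_R(N) ⊑ M` implies `N ⊑ γ_R(M)` (w.r.t. the identity relation on `A`). -/
theorem concretization_galois_forward {Q₁ Q₂ A B : Type*} (R : B → Option (List A))
    (hR : IsActionCode R) (N : LTS Q₁ A) (M : LTS Q₂ B)
    (h : Simulates (contraction R N) M) :
    Simulates N (concretization R M) := by
  obtain ⟨S, hS0, hS⟩ := h
  -- A state `(m, w)` matches `q` when `q` is reached along `w` from some contraction state
  -- matched by `m`; the chaos state matches everything.
  refine ⟨fun q s => ∀ m w, s = some (m, w) → ∃ p, AlphaState R N p ∧ S p m ∧ Steps N p w q,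
    ?_, ?_⟩
  · rintro m w hmw
    obtain ⟨rfl, rfl⟩ : M.start = m ∧ [] = w := by simpa [concretization] using hmw
    exact ⟨N.start, AlphaState.start, hS0, Steps.nil _⟩
  · rintro q (_ | ⟨m, w⟩) a q' hq hstep
    · exact ⟨none, rfl, by simp⟩
    · obtain ⟨p, hp, hpm, hpq⟩ := hq m w rfl
      have hpq' := hpq.snoc hstep
      by_cases hN : NState R (w ++ [a])
      · refine ⟨some (m, w ++ [a]), Or.inl ⟨rfl, hN⟩, ?_⟩
        intro m' w' hmw
        obtain ⟨rfl, rfl⟩ : m = m' ∧ w ++ [a] = w' := by simpa using hmw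
        exact ⟨p, hp, hpm, hpq'⟩
      · by_cases hb : ∃ b, R b = some (w ++ [a])
        · obtain ⟨b, hb⟩ := hb
          obtain ⟨m₁, hm, hS₁⟩ := hS p m b q' hpm ⟨hp, _, hb, hpq'⟩
          refine ⟨some (m₁, []), Or.inr (Or.inl ⟨b, m₁, hm, hb, rfl⟩), ?_⟩
          intro m' w' hmw
          obtain ⟨rfl, rfl⟩ : m₁ = m' ∧ [] = w' := by simpa using hmw
          exact ⟨q', hp.step hb hpq', hS₁, Steps.nil _⟩
        · exact ⟨none, Or.inr (Or.inr ⟨rfl, hN, not_exists.mp hb⟩), by simp⟩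
end

section
/- Let R be an action code from A to B, N an LTS over A, and M an LTS over B. If N ⊑ γ_R(M), then α_R(N) ⊑ M, where γ_R is the concretization taken with respect to the identity relation on A. -/
/-!
Given a simulation `S` from `N` to `γ_R(M)`, the relation `q ~ p :⇔ S q (p, ε)` is a simulation
from `α_R(N)` to `M`. Indeed a `b`-transition of `α_R(N)` is a path of `N` spelling `R b`, and its
image under `S` starts at `(p, ε)`, must descend the code tree along `R b`, and can leave the tree
only at the last letter, by a `b`-transition of `M` (`exists_tr_of_steps`).
-/

universe u v w

/-- Reading the rest `v` of a code word `R b = w ++ v` from a state simulated by `(p, w)` completes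
a `b`-transition of `M`: reading along a code word never leads to chaos,
and prefix-freeness prevents completing any other code word or overrunning `R b`. -/
lemma exists_tr_of_steps {Q₁ Q₂ A B : Type*} {R : B → Option (List A)}
    (hR : PrefixFree R) {N : LTS Q₁ A} {M : LTS Q₂ B} {S : Q₁ → Option (Q₂ × List A) → Prop}
    (hS : IsSimulation N (concretization R M) S) {b : B} {p : Q₂} {q' : Q₁} (v : List A) :
    ∀ (w : List A) (q : Q₁), v ≠ [] → R b = some (w ++ v) → S q (some (p, w)) →
      Steps N q v q' → ∃ p', M.tr p b p' ∧ S q' (some (p', [])) := by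
  induction v with
  | nil => intro w q hv; exact absurd rfl hv
  | cons a v ih =>
    intro w q _ hb hq hst
    have hsplit : w ++ a :: v = (w ++ [a]) ++ v := by simp
    rw [hsplit] at hb
    cases hst with
    | @cons _ q₁ _ _ _ htr hrest =>
      obtain ⟨s, hs, hSs⟩ := hS.2 _ _ _ _ hq htr
      rcases hs with ⟨rfl, hN⟩ | ⟨b', p', hp', hb', rfl⟩ | ⟨rfl, hN, hne⟩
      · by_cases hv : v = []
        · -- `w ++ [a]` would be both a code word and a strict prefix of one
          subst hv
          rw [List.append_nil] at hb
          rcases hN with h0 | ⟨c, u, hc, hpre, hneq⟩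
          · simp at h0
          · obtain rfl := hR _ _ _ _ hb hc hpre
            rw [hb] at hc
            exact absurd (Option.some.inj hc) hneq
        · exact ih _ _ hv hb hSs hrest
      · obtain rfl := hR _ _ _ _ hb' hb (List.prefix_append _ _)
        rw [hb'] at hb
        obtain rfl : v = [] := by simpa using hb
        cases hrest
        exact ⟨p', hp', hSs⟩
      · exfalso
        by_cases hv : v = []
        · subst hv
          exact hne b (by simpa using hb)
        · exact hN (Or.inr ⟨b, _, hb, List.prefix_append _ _, by simpa using hv⟩)

/-- Galois connection for concretization, second direction:
`N ⊑ γ_R(M)` implies `α_R(N) ⊑ M` (w.r.t. the identity relation on `A`). -/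
theorem concretization_galois_backward {Q₁ Q₂ A B : Type*} (R : B → Option (List A))
    (hR : IsActionCode R) (N : LTS Q₁ A) (M : LTS Q₂ B)
    (h : Simulates N (concretization R M)) :
    Simulates (contraction R N) M := by
  obtain ⟨S, hS⟩ := h
  refine ⟨fun q p => S q (some (p, [])), hS.1, ?_⟩
  rintro q p b q' hq ⟨-, w, hw, hst⟩
  exact exists_tr_of_steps hR.2 hS w [] q (hR.1 _ _ hw) hw hq hst
end

section
/- Let R be an action code from A to B and let M, N be LTSs over B. If M ⊑ N, then γ_R(M) ⊑ γ_R(N), where γ_R is the concretization taken with respect to the identity relation on A. -/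
universe u v w

/-- concretization is monotone w.r.t. the simulation preorder. -/
theorem concretization_monotone {Q₁ Q₂ A B : Type*} (R : B → Option (List A))
    (hR : IsActionCode R) (M : LTS Q₁ B) (N : LTS Q₂ B) (h : Simulates M N) :
    Simulates (concretization R M) (concretization R N) := by
  obtain ⟨S, hstart, hstep⟩ := h
  -- Lift `S` by relating `(q, w)` to `(p, w)` whenever `S q p`, and `χ` to `χ`. The position `w`
  -- in the code tree is the same on both sides, so the conditions on `w ++ [a]` transfer verbatim.
  refine ⟨fun s t => (s = none ∧ t = none) ∨
    ∃ q p w, s = some (q, w) ∧ t = some (p, w) ∧ S q p,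
    Or.inr ⟨_, _, [], rfl, rfl, hstart⟩, ?_⟩
  rintro s t a s' (⟨rfl, rfl⟩ | ⟨q, p, w, rfl, rfl, hS⟩) htr
  · exact ⟨none, rfl, Or.inl ⟨htr, rfl⟩⟩
  · rcases htr with ⟨rfl, hN⟩ | ⟨b, q', hq, hb, rfl⟩ | ⟨rfl, hN, hb⟩
    · exact ⟨some (p, w ++ [a]), Or.inl ⟨rfl, hN⟩, Or.inr ⟨_, _, _, rfl, rfl, hS⟩⟩
    · obtain ⟨p', hp, hS'⟩ := hstep q p b q' hS hq
      exact ⟨some (p', []), Or.inr (Or.inl ⟨b, p', hp, hb, rfl⟩),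
        Or.inr ⟨_, _, _, rfl, rfl, hS'⟩⟩
    · exact ⟨none, Or.inr (Or.inr ⟨rfl, hN, hb⟩), Or.inl ⟨rfl, rfl⟩⟩
end

section
/- Let R be an action code from A to B. If M is a deterministic LTS over B, then the concretization γ_R(M) taken with respect to the identity relation on A is a deterministic LTS over A. -/
/-!
From a state `(q, w)`, the three kinds of `a`-transitions are mutually exclusive: by
prefix-freeness a code word is never an internal node of the code tree
(`IsActionCode.not_nState`), and the chaos transition excludes the other two by definition.
Two transitions that both complete a code word complete the word of the same letter `b`, again by
prefix-freeness, so they agree because `M` is deterministic.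
-/

universe u v w

/-- A code word is a leaf of the code tree: a strict extension of it that is also a code word would
contradict prefix-freeness. -/
lemma IsActionCode.not_nState {A B : Type*} {R : B → Option (List A)} (hR : IsActionCode R)
    {b : B} {w : List A} (hb : R b = some w) : ¬ NState R w := by
  rintro (hw | ⟨b', v, hv, hpre, hne⟩)
  · exact hR.1 b w hb hw
  · obtain rfl := hR.2 b b' w v hb hv hpre
    exact hne (Option.some.inj (hb.symm.trans hv))

/-- concretization (w.r.t. the identity relation) preserves determinism. -/
theorem concretization_preserves_determinism {Q A B : Type*} (R : B → Option (List A))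
    (hR : IsActionCode R) (M : LTS Q B) (hM : Deterministic M) :
    Deterministic (concretization R M) := by
  rintro (_ | ⟨q, w⟩) a s s' h h'
  · exact Eq.trans h (Eq.symm h')
  · rcases h with ⟨rfl, hN⟩ | ⟨b, r, hr, hb, rfl⟩ | ⟨rfl, hN, hb⟩ <;>
      rcases h' with ⟨rfl, hN'⟩ | ⟨b', r', hr', hb', rfl⟩ | ⟨rfl, hN', hb'⟩
    · rfl
    · exact absurd hN (hR.not_nState hb')
    · exact absurd hN hN'
    · exact absurd hN' (hR.not_nState hb)
    · obtain rfl := hR.2 b b' _ _ hb hb' (List.prefix_refl _)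
      rw [hM q b r r' hr hr']
    · exact absurd hb (hb' b)
    · exact absurd hN' hN
    · exact absurd hb' (hb b')
    · rfl
end

section
/- Let R be an action code from A to B and let M be an LTS over B such that every action label occurring on a transition of M belongs to dom(R). Then M ≅ α_R(γ_R(M)), where γ_R is the concretization taken with respect to the identity relation on A (Galois insertion). -/
/-!
The isomorphism sends a reachable state `q` of `M` to `(q, ε)`. Everything rests on
`steps_concretization_iff`: starting from `(q, ε)`, the concretization reads a code word `R b`
exactly by walking through the strict prefixes of `R b` and then firing a transition
`q -b→ q'` of `M`, which ends in `(q', ε)`. Prefix-freeness guarantees that no proper prefix of `R b`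
is itself a code word, that `R b` is not an internal node of the code tree, and that `b` is the only
label coded by `R b`; so no other step, in particular no step to chaos, is possible along the way.
Hence the contraction has precisely the `b`-transitions of `M` between states `(q, ε)`, and these
are its only reachable states.
-/

universe u v w

section Helpers

variable {Q A B : Type*} {R : B → Option (List A)} {M : LTS Q B}

/-- Reading the remaining part `v` of the code word `R b = w ++ v` from `(q, w)` amounts to
performing a `b`-transition of `M`. -/
lemma steps_concretization_iff (hR : PrefixFree R) (q : Q) (b : B) (v : List A) (hv : v ≠ []) :
    ∀ (w : List A) (s : Option (Q × List A)), R b = some (w ++ v) →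
      (Steps (concretization R M) (some (q, w)) v s ↔ ∃ q', M.tr q b q' ∧ s = some (q', [])) := by
  induction v with
  | nil => exact absurd rfl hv
  | cons a v ih =>
    intro w s hb
    by_cases hv_nil : v = []
    · subst hv_nil
      -- A complete code word is a leaf of the code tree.
      have hleaf : ¬ NState R (w ++ [a]) := by
        rintro (h | ⟨b', v', hb', hpre, hne⟩)
        · simp at h
        · obtain rfl := hR _ _ _ _ hb hb' hpre
          exact hne (Option.some.inj (hb.symm.trans hb'))
      constructor
      · rintro (_ | ⟨htr, hnil⟩)
        cases hnil
        rcases htr with ⟨-, h⟩ | ⟨b', q', htr, hb', rfl⟩ | ⟨-, -, h⟩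
        · exact absurd h hleaf
        · obtain rfl := hR _ _ _ _ hb hb' List.prefix_rfl
          exact ⟨q', htr, rfl⟩
        · exact absurd hb (h b)
      · rintro ⟨q', htr, rfl⟩
        exact Steps.cons (Or.inr (Or.inl ⟨b, q', htr, hb, rfl⟩)) (Steps.nil _)
    · have hb2 : R b = some ((w ++ [a]) ++ v) := by simpa using hb
      have hnode : NState R (w ++ [a]) :=
        Or.inr ⟨b, _, hb2, List.prefix_append _ _, by simpa using hv_nil⟩
      rw [← ih hv_nil _ s hb2]
      constructor
      · rintro (_ | ⟨htr, hrest⟩)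
        rcases htr with ⟨rfl, -⟩ | ⟨b', q', -, hb', -⟩ | ⟨-, h, -⟩
        · exact hrest
        · -- A proper prefix of a code word cannot be a code word.
          obtain rfl := hR _ _ _ _ hb' hb2 (List.prefix_append _ _)
          rw [hb'] at hb2
          simp_all
        · exact absurd hnode h
      · exact fun h => Steps.cons (Or.inl ⟨rfl, hnode⟩) h

lemma contraction_concretization_tr_iff (hR : IsActionCode R)
    (hdom : ∀ q b q', M.tr q b q' → ∃ w, R b = some w)
    (q : Q) (b : B) (s : Option (Q × List A)) :
    (contraction R (concretization R M)).tr (some (q, [])) b s ↔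
      AlphaState R (concretization R M) (some (q, [])) ∧
        ∃ q', M.tr q b q' ∧ s = some (q', []) := by
  refine and_congr_right fun _ => ⟨?_, ?_⟩
  · rintro ⟨w, hb, hs⟩
    exact (steps_concretization_iff hR.2 q b w (hR.1 _ _ hb) [] s hb).1 hs
  · rintro ⟨q', htr, hs⟩
    obtain ⟨w, hb⟩ := hdom _ _ _ htr
    exact ⟨w, hb, (steps_concretization_iff hR.2 q b w (hR.1 _ _ hb) [] s hb).2 ⟨q', htr, hs⟩⟩

lemma steps_lift_s15 (hR : IsActionCode R)
    (hdom : ∀ q b q', M.tr q b q' → ∃ w, R b = some w)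
    {q q' : Q} {u : List B} (h : Steps M q u q')
    (hα : AlphaState R (concretization R M) (some (q, []))) :
    AlphaState R (concretization R M) (some (q', [])) ∧
      Steps (contraction R (concretization R M)) (some (q, [])) u (some (q', [])) := by
  induction h with
  | nil q => exact ⟨hα, Steps.nil _⟩
  | cons htr _ ih =>
    have hstep := (contraction_concretization_tr_iff hR hdom _ _ _).2 ⟨hα, _, htr, rfl⟩
    obtain ⟨w, hb, hs⟩ := hstep.2
    obtain ⟨h₁, h₂⟩ := ih (AlphaState.step hα hb hs)
    exact ⟨h₁, Steps.cons hstep h₂⟩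

lemma steps_project (hR : IsActionCode R)
    (hdom : ∀ q b q', M.tr q b q' → ∃ w, R b = some w)
    {s s' : Option (Q × List A)} {u : List B}
    (h : Steps (contraction R (concretization R M)) s u s') :
    ∀ q, s = some (q, []) → ∃ q', s' = some (q', []) ∧ Steps M q u q' := by
  induction h with
  | nil s => exact fun q hq => ⟨q, hq, Steps.nil _⟩
  | cons htr _ ih =>
    rintro q rfl
    obtain ⟨-, q₁, hM, hs⟩ := (contraction_concretization_tr_iff hR hdom _ _ _).1 htr
    obtain ⟨q', hq', hsteps⟩ := ih q₁ hs
    exact ⟨q', hq', Steps.cons hM hsteps⟩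

end Helpers

/-- Galois insertion: if every label occurring on a transition of `M`
is in `dom(R)`, then `M ≅ α_R(γ_R(M))`. -/
theorem concretization_galois_insertion {Q A B : Type*} (R : B → Option (List A))
    (hR : IsActionCode R) (M : LTS Q B)
    (hdom : ∀ q b q', M.tr q b q' → ∃ w, R b = some w) :
    Isomorphic M (contraction R (concretization R M)) := by
  have hlift : ∀ q, Reachable M q → AlphaState R (concretization R M) (some (q, [])) ∧
      Reachable (contraction R (concretization R M)) (some (q, [])) := by
    rintro q ⟨u, hu⟩
    obtain ⟨h₁, h₂⟩ := steps_lift_s15 hR hdom hu AlphaState.start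
    exact ⟨h₁, u, h₂⟩
  refine ⟨fun q => ⟨some (q.1, []), (hlift q.1 q.2).2⟩, ⟨?_, ?_⟩, rfl, ?_⟩
  · rintro ⟨q, hq⟩ ⟨q', hq'⟩ h
    simpa using h
  · rintro ⟨s, u, hu⟩
    obtain ⟨q, rfl, hq⟩ := steps_project hR hdom hu M.start rfl
    exact ⟨⟨q, u, hq⟩, rfl⟩
  · intro q q' b
    rw [contraction_concretization_tr_iff hR hdom]
    constructor
    · exact fun h => ⟨(hlift q.1 q.2).1, q'.1, h, rfl⟩
    · rintro ⟨-, q₁, h, he⟩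
      have : q'.1 = q₁ := by simpa using he
      rwa [this]
end

section
/- Action codes are closed under Kleisli composition: if R : B ⇀ A^+ and S : C ⇀ B^+ are prefix-free partial maps into nonempty words, then their Kleisli composition R * S : C ⇀ A^+ is again a prefix-free partial map into nonempty words. -/
/-!
The extension of an action code `R` to words reflects the prefix order: if `R(b₁)⋯R(bₙ)` is a
prefix of `R(b'₁)⋯R(b'ₘ)`, then the first factors `R(b₁)` and `R(b'₁)` are prefixes of a common
word, hence comparable, so `b₁ = b'₁` by prefix-freeness; cancel and induct
(`prefix_of_flattenCode_prefix`). Prefix-freeness of `R * S` then reduces to that of `S`.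
Since `R` is nonempty-valued, the extension sends only the empty word to the empty word, which
gives nonemptiness and also the base case of the induction.
-/

universe u v w

lemma flattenCode_cons_eq_some {A B : Type*} {R : B → Option (List A)} {b : B} {bs : List B}
    {w : List A} (h : flattenCode R (b :: bs) = some w) :
    ∃ u v, R b = some u ∧ flattenCode R bs = some v ∧ w = u ++ v := by
  simp only [flattenCode, Option.bind_eq_some_iff, Option.map_eq_some_iff] at h
  obtain ⟨u, hu, v, hv, rfl⟩ := h
  exact ⟨u, v, hu, hv, rfl⟩

lemma eq_nil_of_flattenCode_eq_nil {A B : Type*} {R : B → Option (List A)}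
    (hR : NonemptyValued R) {bs : List B} (h : flattenCode R bs = some []) : bs = [] := by
  cases bs with
  | nil => rfl
  | cons b bs =>
    obtain ⟨u, v, hu, -, huv⟩ := flattenCode_cons_eq_some h
    exact absurd (List.append_eq_nil_iff.mp huv.symm).1 (hR b u hu)

/-- The extension of an action code to words reflects the prefix order. -/
lemma prefix_of_flattenCode_prefix {A B : Type*} {R : B → Option (List A)}
    (hR : IsActionCode R) {bs bs' : List B} {w w' : List A}
    (h : flattenCode R bs = some w) (h' : flattenCode R bs' = some w') (hw : w <+: w') :
    bs <+: bs' := by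
  induction bs generalizing bs' w w' with
  | nil => exact List.nil_prefix
  | cons b bs ih =>
    cases bs' with
    | nil =>
      obtain rfl : [] = w' := Option.some.inj h'
      obtain rfl := List.prefix_nil.mp hw
      exact absurd (eq_nil_of_flattenCode_eq_nil hR.1 h) (List.cons_ne_nil b bs)
    | cons b' bs' =>
      obtain ⟨u, v, hu, hv, rfl⟩ := flattenCode_cons_eq_some h
      obtain ⟨u', v', hu', hv', rfl⟩ := flattenCode_cons_eq_some h'
      -- `u` and `u'` are both prefixes of `u' ++ v'`, hence comparable.
      have hb : b = b' := by
        rcases List.prefix_or_prefix_of_prefix ((List.prefix_append u v).trans hw)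
          (List.prefix_append u' v') with huu | huu
        · exact hR.2 b b' u u' hu hu' huu
        · exact (hR.2 b' b u' u hu' hu huu).symm
      subst hb
      obtain rfl : u = u' := Option.some.inj (hu.symm.trans hu')
      exact List.cons_prefix_cons.mpr
        ⟨rfl, ih hv hv' ((List.prefix_append_right_inj u).mp hw)⟩

/-- action codes are closed under Kleisli composition. -/
theorem compCode_isActionCode {A B C : Type*} (R : B → Option (List A))
    (S : C → Option (List B)) (hR : IsActionCode R) (hS : IsActionCode S) :
    IsActionCode (compCode R S) := by
  constructor
  · rintro c w hc rfl
    obtain ⟨bs, hbs, hw⟩ := Option.bind_eq_some_iff.mp hc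
    exact hS.1 c bs hbs (eq_nil_of_flattenCode_eq_nil hR.1 hw)
  · intro c c' w w' hc hc' hww
    obtain ⟨bs, hbs, hw⟩ := Option.bind_eq_some_iff.mp hc
    obtain ⟨bs', hbs', hw'⟩ := Option.bind_eq_some_iff.mp hc'
    exact hS.2 c c' bs bs' hbs hbs' (prefix_of_flattenCode_prefix hR hw hw' hww)
end

section
/- Let I, O, X, Y be nonempty sets, let M be a Mealy machine (an LTS over I × O), and let R be an action code from I × O to X × Y. If M is output deterministic and R is determinate, then the contraction α_R(M) (a Mealy machine over X × Y) is output deterministic. -/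
/-!
Suppose a state `q` of the contraction has transitions labelled `(x, y)` and `(x, y')`, realised
in `M` by paths from `q` spelling the code words `R (x, y)` and `R (x, y')`. As long as the two
paths agree, determinacy forces their next inputs to agree, and output determinism of `M` then
forces the next outputs and states to agree. So one code word is a prefix of the other
(`prefix_or_prefix_of_steps`), and prefix-freeness gives `y = y'`. Both paths now spell the same
word, so they end in the same state (`steps_unique`).
-/

universe u v w

/-- In an output deterministic machine a word determines the target of a path. -/
lemma steps_unique {Q I O : Type*} {M : LTS Q (I × O)} (hM : OutputDeterministic M)
    {q r r' : Q} {w : List (I × O)} (h : Steps M q w r) (h' : Steps M q w r') : r = r' := by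
  induction h with
  | nil q => cases h'; rfl
  | cons ht _ ih =>
    cases h' with
    | cons ht' hs' =>
      obtain ⟨-, rfl⟩ := hM _ _ _ _ _ _ ht ht'
      exact ih hs'

/-- Two paths from the same state whose words never branch on an input have comparable words.
The non-branching hypothesis is that of `Determinate`, for one fixed pair of words. -/
lemma prefix_or_prefix_of_steps {Q I O : Type*} {M : LTS Q (I × O)}
    (hM : OutputDeterministic M) {q r₁ r₂ : Q} {w₁ w₂ : List (I × O)}
    (h₁ : Steps M q w₁ r₁) (h₂ : Steps M q w₂ r₂)
    (hw : ∀ u i₁ o₁ i₂ o₂, (u ++ [(i₁, o₁)]) <+: w₁ → (u ++ [(i₂, o₂)]) <+: w₂ → i₁ = i₂) :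
    w₁ <+: w₂ ∨ w₂ <+: w₁ := by
  induction h₁ generalizing w₂ with
  | nil q => exact Or.inl List.nil_prefix
  | @cons q q' q'' a w ht _ ih =>
    cases h₂ with
    | nil => exact Or.inr List.nil_prefix
    | @cons _ p' _ b v ht' hs' =>
      obtain ⟨i, o⟩ := a
      obtain ⟨j, o'⟩ := b
      obtain rfl : i = j := hw [] i o j o' (by simp) (by simp)
      obtain ⟨rfl, rfl⟩ := hM _ _ _ _ _ _ ht ht'
      have hvw := ih hs' fun u i₁ o₁ i₂ o₂ hu hu' =>
        hw ((i, o) :: u) i₁ o₁ i₂ o₂ (by simpa using hu) (by simpa using hu')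
      simpa using hvw

/-- if the Mealy machine `M` is output deterministic and the action
code `R` is determinate, then the contraction `α_R(M)` is output deterministic. -/
theorem contraction_preserves_outputDeterminism {Q I O X Y : Type*}
    [Nonempty I] [Nonempty O] [Nonempty X] [Nonempty Y]
    (M : LTS Q (I × O)) (R : X × Y → Option (List (I × O)))
    (hR : IsActionCode R) (hM : OutputDeterministic M) (hdet : Determinate R) :
    OutputDeterministic (contraction R M) := by
  rintro q x y y' r r' ⟨-, w, hw, hs⟩ ⟨-, w', hw', hs'⟩
  have hyy : (x, y) = (x, y') := by
    rcases prefix_or_prefix_of_steps hM hs hs' (fun u i₁ o₁ i₂ o₂ =>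
      hdet x y y' w w' u i₁ o₁ i₂ o₂ hw hw') with h | h
    · exact hR.2 _ _ _ _ hw hw' h
    · exact (hR.2 _ _ _ _ hw' hw h).symm
  obtain rfl : y = y' := congrArg Prod.snd hyy
  obtain rfl : w = w' := Option.some.inj (hw.symm.trans hw')
  exact ⟨rfl, steps_unique hM hs hs'⟩
end
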